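/- (Bisztriczky's theorem, total count.) Let K₁,…,K_d be a strongly separated family of convex bodies in ℝ^d. Then the collection of affine hyperplanes of ℝ^d that are tangent to every Kᵢ (that is, sets H = {x : ⟨u,x⟩ = α} for some nonzero u and α, such that for every i, H ∩ Kᵢ ≠ ∅ and Kᵢ lies in one of the two closed half-spaces bounded by H) has exactly 2^d elements. -/

import Mathlib

open scoped InnerProductSpace

/-- A family of sets in `ℝ^d` is strongly separated if every subset of indices can be
strictly separated from its complement by an affine hyperplane. -/
def StronglySeparated {d m : ℕ} (S : Fin m → Set (EuclideanSpace ℝ (Fin d))) : Prop :=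
  ∀ I : Finset (Fin m), ∃ (u : EuclideanSpace ℝ (Fin d)) (α : ℝ), u ≠ 0 ∧
    (∀ i ∈ I, ∀ x ∈ S i, ⟪u, x⟫_ℝ < α) ∧ (∀ i, i ∉ I → ∀ x ∈ S i, α < ⟪u, x⟫_ℝ)

/-!
In homogeneous coordinates the bodies become compact convex sets `L i` in a space of dimension
`n + 1` whose transversals `y` are linearly independent, and `y` spans a hyperplane which is
oriented by the linear form `crossForm b y`.

Two such forms `v = crossForm b y` and `w = crossForm b y'` with `0 ≤ v (y' i) * w (y i)` for all
`i` are positively proportional. Otherwise `v x > 0 > w x` for some `x`. Every member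
`(1 - s) v - s w` of the pencil from `v` to `-w` has zeros in each `L i`, and the transversals on
which members of the pencil vanish form a connected set joining `y` to `y'`. The sign of
`crossForm b · x` changes between its ends, so `x` lies on the hyperplane of some transversal,
although no member of the pencil vanishes at `x`.

Hence at most one tangent hyperplane has the bodies on prescribed sides, relative to its
orientation. It exists because the bodies can be made tangent one at a time: through each `p` in
`L k` there is a hyperplane tangent to the bodies treated so far, the relation that `q` lies on
the nonnegative side of the hyperplane through `p` is a total preorder on `L k` with closed
sections, and by compactness some `p` has all of `L k` on that side. So the tangent hyperplanes
correspond to the `2 ^ d` sign patterns.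
-/

theorem isPreconnected_of_image_of_fibers {X Y : Type*} [TopologicalSpace X] [TopologicalSpace Y]
    [T2Space Y] {f : X → Y} {S : Set X} (hf : ContinuousOn f S) (hS : IsCompact S)
    (himage : IsPreconnected (f '' S)) (hfiber : ∀ y ∈ f '' S, IsPreconnected (S ∩ f ⁻¹' {y})) :
    IsPreconnected S := by
  rw [isPreconnected_closed_iff]
  rintro t t' ht ht' hcover ⟨x, hxS, hxt⟩ ⟨x', hx'S, hx't'⟩
  have isClosed_image : ∀ u, IsClosed u → IsClosed (f '' (S ∩ u)) := fun u hu =>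
    ((hS.inter_right hu).image_of_continuousOn (hf.mono Set.inter_subset_left)).isClosed
  have image_cover : f '' S ⊆ f '' (S ∩ t) ∪ f '' (S ∩ t') := by
    rw [← Set.image_union, ← Set.inter_union_distrib_left]
    exact Set.image_mono (Set.subset_inter subset_rfl hcover)
  obtain ⟨y, hyS, ⟨a, ⟨haS, hat⟩, hay⟩, a', ⟨ha'S, ha't'⟩, ha'y⟩ :=
    isPreconnected_closed_iff.1 himage _ _ (isClosed_image t ht) (isClosed_image t' ht')
      image_cover ⟨f x, ⟨x, hxS, rfl⟩, x, ⟨hxS, hxt⟩, rfl⟩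
      ⟨f x', ⟨x', hx'S, rfl⟩, x', ⟨hx'S, hx't'⟩, rfl⟩
  obtain ⟨z, ⟨hzS, -⟩, hz⟩ := isPreconnected_closed_iff.1 (hfiber y hyS) t t' ht ht'
    (Set.inter_subset_left.trans hcover) ⟨a, ⟨haS, hay⟩, hat⟩ ⟨a', ⟨ha'S, ha'y⟩, ha't'⟩
  exact ⟨z, hzS, hz⟩

theorem sameRay_of_forall_pos_imp_nonneg {𝕜 V : Type*} [Field 𝕜] [LinearOrder 𝕜]
    [IsStrictOrderedRing 𝕜] [AddCommGroup V] [Module 𝕜 V] {v w : Module.Dual 𝕜 V}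
    (h : ∀ x, 0 < v x → 0 ≤ w x) : SameRay 𝕜 v w := by
  rcases eq_or_ne v 0 with rfl | hv
  · exact SameRay.zero_left w
  obtain ⟨e, he⟩ : ∃ e, v e = 1 := v.surjective hv 1
  have vanish : ∀ x, v x = 0 → w x = 0 := by
    intro x hx
    by_contra hwx
    have := h (e + (-(w e + 1) / w x) • x) (by simp [he, hx])
    rw [map_add, map_smul, smul_eq_mul, div_mul_cancel₀ _ hwx] at this
    linarith
  have hwv : w = w e • v := by
    ext x
    have := vanish (x - v x • e) (by simp [he])
    rw [map_sub, map_smul, smul_eq_mul, sub_eq_zero] at this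
    rw [this, LinearMap.smul_apply, smul_eq_mul, mul_comm]
  rw [hwv]
  exact SameRay.sameRay_nonneg_smul_right v (h e (by simp [he]))

section CrossForm

variable {n : ℕ} {𝕜 F : Type*} [Field 𝕜] [AddCommGroup F] [Module 𝕜 F]

/-- The generalized cross product of `n` vectors of an `(n + 1)`-dimensional space, as a linear
form; its sign orients the hyperplane which they span. -/
noncomputable def crossForm (b : Module.Basis (Fin (n + 1)) 𝕜 F) (y : Fin n → F) :
    Module.Dual 𝕜 F where
  toFun x := b.det (Matrix.vecCons x y)
  map_add' x x' := by
    simp only [← AlternatingMap.curryLeft_apply_apply, map_add, AlternatingMap.add_apply]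
  map_smul' c x := by
    simp only [← AlternatingMap.curryLeft_apply_apply, map_smul, AlternatingMap.smul_apply,
      RingHom.id_apply]

theorem crossForm_apply (b : Module.Basis (Fin (n + 1)) 𝕜 F) (y : Fin n → F) (x : F) :
    crossForm b y x = b.det (Matrix.vecCons x y) := rfl

theorem crossForm_apply_eq_zero_iff {b : Module.Basis (Fin (n + 1)) 𝕜 F} {y : Fin n → F}
    (hy : LinearIndependent 𝕜 y) {x : F} :
    crossForm b y x = 0 ↔ x ∈ Submodule.span 𝕜 (Set.range y) := by
  have hfin : LinearIndependent 𝕜 (Matrix.vecCons x y) ↔ x ∉ Submodule.span 𝕜 (Set.range y) := by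
    rw [Matrix.vecCons, linearIndependent_finCons, and_iff_right hy]
  have : Module.Finite 𝕜 F := .of_basis b
  have hbasis : LinearIndependent 𝕜 (Matrix.vecCons x y) ↔ b.det (Matrix.vecCons x y) ≠ 0 := by
    rw [← isUnit_iff_ne_zero, ← Module.Basis.is_basis_iff_det]
    exact ⟨fun h => ⟨h, h.span_eq_top_of_card_eq_finrank' (Module.finrank_eq_card_basis b).symm⟩,
      fun h => h.1⟩
  exact not_iff_not.1 (hbasis.symm.trans hfin)

theorem crossForm_apply_self (b : Module.Basis (Fin (n + 1)) 𝕜 F) (y : Fin n → F) (i : Fin n) :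
    crossForm b y (y i) = 0 :=
  b.det.map_eq_zero_of_eq _ (i := 0) (j := i.succ) (by simp) (Fin.succ_ne_zero i).symm

theorem ker_eq_span_of_forall_apply_eq_zero (hn : Module.finrank 𝕜 F = n + 1)
    {y : Fin n → F} (hy : LinearIndependent 𝕜 y) {v : Module.Dual 𝕜 F} (hv : v ≠ 0)
    (hvy : ∀ i, v (y i) = 0) :
    LinearMap.ker v = Submodule.span 𝕜 (Set.range y) := by
  have : FiniteDimensional 𝕜 F := Module.finite_of_finrank_eq_succ hn
  refine (Submodule.eq_of_le_of_finrank_eq ?_ ?_).symm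
  · rw [Submodule.span_le]
    rintro _ ⟨i, rfl⟩
    exact hvy i
  · have := Module.Dual.finrank_ker_add_one_of_ne_zero hv
    rw [finrank_span_eq_card hy, Fintype.card_fin]
    omega

theorem crossForm_ne_zero {b : Module.Basis (Fin (n + 1)) 𝕜 F} {y : Fin n → F}
    (hy : LinearIndependent 𝕜 y) : crossForm b y ≠ 0 := by
  intro h
  have : Module.Finite 𝕜 F := .of_basis b
  have htop : Submodule.span 𝕜 (Set.range y) = ⊤ :=
    eq_top_iff.2 fun x _ => (crossForm_apply_eq_zero_iff (b := b) hy).1 (by rw [h]; rfl)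
  have := finrank_span_eq_card hy
  rw [htop, finrank_top, Module.finrank_eq_card_basis b] at this
  simp at this

end CrossForm

theorem continuous_crossForm_apply {n : ℕ} {F : Type*} [NormedAddCommGroup F] [NormedSpace ℝ F]
    (b : Module.Basis (Fin (n + 1)) ℝ F) :
    Continuous fun p : (Fin n → F) × F => crossForm b p.1 p.2 := by
  have : Module.Finite ℝ F := .of_basis b
  simp only [crossForm_apply, Module.Basis.det_apply]
  refine Continuous.matrix_det (continuous_matrix fun i j => ?_)
  refine (LinearMap.continuous_of_finiteDimensional (b.coord i)).comp ?_
  refine Fin.cases continuous_snd (fun k => ?_) j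
  exact (continuous_apply k).comp continuous_fst

theorem exists_mem_mul_eq_mul_of_pencil {F : Type*} [TopologicalSpace F] [AddCommGroup F]
    [Module ℝ F] {C : Set F} (hC : IsPreconnected C) {v w : StrongDual ℝ F} {y y' : F}
    (hy : y ∈ C) (hy' : y' ∈ C) (hvy : v y = 0) (hwy' : w y' = 0) (hvw : 0 ≤ v y' * w y) {s : ℝ}
    (hs : s ∈ Set.Icc 0 1) : ∃ z ∈ C, (1 - s) * v z = s * w z := by
  have hs' : 0 ≤ 1 - s := sub_nonneg.2 hs.2
  have hv : ContinuousOn (fun z => (1 - s) * v z) C := by fun_prop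
  have hw : ContinuousOn (fun z => s * w z) C := by fun_prop
  rcases mul_nonneg_iff.1 hvw with ⟨hvy', hwy⟩ | ⟨hvy', hwy⟩
  · exact hC.intermediate_value₂ hy hy' hv hw
      (by rw [hvy, mul_zero]; exact mul_nonneg hs.1 hwy)
      (by rw [hwy', mul_zero]; exact mul_nonneg hs' hvy')
  · exact hC.intermediate_value₂ hy' hy hv hw
      (by rw [hwy', mul_zero]; exact mul_nonpos_of_nonneg_of_nonpos hs' hvy')
      (by rw [hvy, mul_zero]; exact mul_nonpos_of_nonneg_of_nonpos hs.1 hwy)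

theorem isPreconnected_pencil_transversals {ι F : Type*} [TopologicalSpace F] [AddCommGroup F]
    [IsTopologicalAddGroup F] [Module ℝ F] [ContinuousSMul ℝ F] {L : ι → Set F}
    (hcomp : ∀ i, IsCompact (L i)) (hconv : ∀ i, Convex ℝ (L i)) {v w : StrongDual ℝ F}
    {y y' : ι → F} (hy : ∀ i, y i ∈ L i) (hy' : ∀ i, y' i ∈ L i) (hvy : ∀ i, v (y i) = 0)
    (hwy' : ∀ i, w (y' i) = 0) (hvw : ∀ i, 0 ≤ v (y' i) * w (y i)) :
    IsPreconnected {p : ℝ × (ι → F) | p ∈ Set.Icc (0 : ℝ) 1 ×ˢ Set.univ.pi L ∧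
      ∀ i, (1 - p.1) * v (p.2 i) = p.1 * w (p.2 i)} := by
  set T := {p : ℝ × (ι → F) | p ∈ Set.Icc (0 : ℝ) 1 ×ˢ Set.univ.pi L ∧
    ∀ i, (1 - p.1) * v (p.2 i) = p.1 * w (p.2 i)}
  have isCompact_T : IsCompact T := by
    refine (isCompact_Icc.prod (isCompact_univ_pi hcomp)).inter_right
      (t := {p | ∀ i, (1 - p.1) * v (p.2 i) = p.1 * w (p.2 i)}) ?_
    simp only [Set.ofPred_forall]
    exact isClosed_iInter fun i => isClosed_eq (by fun_prop) (by fun_prop)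
  have image_fst : Prod.fst '' T = Set.Icc 0 1 := by
    refine Set.Subset.antisymm (Set.image_subset_iff.2 fun p hp => hp.1.1) fun s hs => ?_
    choose Y hYL hY using fun i => exists_mem_mul_eq_mul_of_pencil (hconv i).isPreconnected
      (hy i) (hy' i) (hvy i) (hwy' i) (hvw i) hs
    exact ⟨(s, Y), ⟨⟨hs, fun i _ => hYL i⟩, hY⟩, rfl⟩
  refine isPreconnected_of_image_of_fibers continuous_fst.continuousOn isCompact_T
    (image_fst ▸ isPreconnected_Icc) fun s hs => ?_
  rw [image_fst] at hs
  have convex_slice : ∀ i, Convex ℝ (L i ∩ {z | (1 - s) * v z = s * w z}) := fun i => by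
    have : {z | (1 - s) * v z = s * w z} = LinearMap.ker ((1 - s) • v - s • w).toLinearMap := by
      ext z
      exact sub_eq_zero.symm
    rw [this]
    exact (hconv i).inter (Submodule.convex _)
  have fiber_eq : T ∩ Prod.fst ⁻¹' {s} =
      {s} ×ˢ Set.univ.pi fun i => L i ∩ {z | (1 - s) * v z = s * w z} := by
    ext ⟨s', Y⟩
    constructor
    · rintro ⟨⟨⟨-, hYL⟩, hY⟩, rfl⟩
      exact ⟨rfl, fun i _ => ⟨hYL i trivial, hY i⟩⟩
    · rintro ⟨rfl, hY⟩
      exact ⟨⟨⟨hs, fun i _ => (hY i trivial).1⟩, fun i => (hY i trivial).2⟩, rfl⟩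
  rw [fiber_eq]
  exact isPreconnected_singleton.prod
    (isPreconnected_univ_pi fun i => (convex_slice i).isPreconnected)

theorem sameRay_crossForm {n : ℕ} {F : Type*} [NormedAddCommGroup F] [NormedSpace ℝ F]
    {b : Module.Basis (Fin (n + 1)) ℝ F} {L : Fin n → Set F}
    (hcomp : ∀ i, IsCompact (L i)) (hconv : ∀ i, Convex ℝ (L i))
    (hind : ∀ y : Fin n → F, (∀ i, y i ∈ L i) → LinearIndependent ℝ y) {y y' : Fin n → F}
    (hy : ∀ i, y i ∈ L i) (hy' : ∀ i, y' i ∈ L i)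
    (hcross : ∀ i, 0 ≤ crossForm b y (y' i) * crossForm b y' (y i)) :
    SameRay ℝ (crossForm b y) (crossForm b y') := by
  have : FiniteDimensional ℝ F := .of_basis b
  refine sameRay_of_forall_pos_imp_nonneg fun x hv => le_of_not_gt fun hw => ?_
  have hT := isPreconnected_pencil_transversals hcomp hconv
    (v := (crossForm b y).toContinuousLinearMap) (w := (crossForm b y').toContinuousLinearMap)
    hy hy' (crossForm_apply_self b y) (crossForm_apply_self b y') hcross
  have continuous_cross : Continuous fun p : ℝ × (Fin n → F) => crossForm b p.2 x :=
    (continuous_crossForm_apply b).comp (continuous_snd.prodMk continuous_const)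
  obtain ⟨⟨s, Y⟩, ⟨⟨hs, hYL⟩, hY⟩, hzero⟩ := hT.intermediate_value₂ (a := (1, y')) (b := (0, y))
    ⟨by simpa using hy', by simp [crossForm_apply_self]⟩
    ⟨by simpa using hy, by simp [crossForm_apply_self]⟩
    continuous_cross.continuousOn continuousOn_const hw.le hv.le
  have hx := (crossForm_apply_eq_zero_iff (hind Y fun i => hYL i trivial)).1 hzero
  have span_le : Submodule.span ℝ (Set.range Y) ≤
      LinearMap.ker ((1 - s) • crossForm b y - s • crossForm b y') := by
    rw [Submodule.span_le]
    rintro _ ⟨i, rfl⟩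
    exact sub_eq_zero.2 (hY i)
  have hpencil : (1 - s) * crossForm b y x = s * crossForm b y' x := sub_eq_zero.1 (span_le hx)
  rcases hs.1.eq_or_lt with hs0 | hs0
  · obtain rfl : 0 = s := hs0
    linarith
  · have := mul_nonneg (sub_nonneg.2 hs.2) hv.le
    have := mul_neg_of_pos_of_neg hs0 hw
    linarith

section TangentPointFamily

variable {F : Type*} [TopologicalSpace F] [AddCommGroup F] [Module ℝ F] {C : Set F}
  {φ : F → StrongDual ℝ F}

theorem apply_nonneg_iff_of_sameRay (hself : ∀ p ∈ C, φ p p = 0) (hne : ∀ p ∈ C, φ p ≠ 0)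
    (hray : ∀ p ∈ C, ∀ q ∈ C, 0 ≤ φ p q * φ q p → SameRay ℝ (φ p) (φ q)) {p q : F}
    (hp : p ∈ C) (hq : q ∈ C) : 0 ≤ φ p q ↔ φ q p ≤ 0 := by
  have vanish : 0 ≤ φ p q * φ q p → φ p q = 0 ∧ φ q p = 0 := by
    intro h
    obtain ⟨c, -, hc⟩ := (hray p hp q hq h).exists_pos_left (hne p hp) (hne q hq)
    obtain ⟨c', -, hc'⟩ := (hray p hp q hq h).exists_pos_right (hne p hp) (hne q hq)
    exact ⟨by simp [hc', hself q hq], by simp [← hc, hself p hp]⟩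
  constructor <;> intro h <;> by_contra! hlt
  · exact hlt.ne' (vanish (mul_nonneg h hlt.le)).2
  · exact hlt.ne (vanish (mul_nonneg_of_nonpos_of_nonpos hlt.le h)).1

theorem apply_nonneg_trans_of_sameRay [IsTopologicalAddGroup F] [ContinuousSMul ℝ F]
    (hC : Convex ℝ C) (hself : ∀ p ∈ C, φ p p = 0) (hne : ∀ p ∈ C, φ p ≠ 0)
    (hray : ∀ p ∈ C, ∀ q ∈ C, 0 ≤ φ p q * φ q p → SameRay ℝ (φ p) (φ q)) {p q r : F}
    (hp : p ∈ C) (hq : q ∈ C) (hr : r ∈ C) (hpq : 0 ≤ φ p q) (hqr : 0 ≤ φ q r) :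
    0 ≤ φ p r := by
  by_contra! hpr
  have hqp : φ q p ≤ 0 := (apply_nonneg_iff_of_sameRay hself hne hray hp hq).1 hpq
  obtain ⟨x, hx, hqx⟩ : ∃ x ∈ segment ℝ p r, φ q x = 0 :=
    (convex_segment p r).isPreconnected.intermediate_value (left_mem_segment ℝ p r)
      (right_mem_segment ℝ p r) (φ q).continuous.continuousOn ⟨hqp, hqr⟩
  have hxC : x ∈ C := hC.segment_subset hp hr hx
  obtain ⟨c, hc, hqx_ray⟩ := (hray q hq x hxC (by rw [hqx, zero_mul])).exists_pos_left
    (hne q hq) (hne x hxC)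
  have hxp : φ x p ≤ 0 := by
    rw [← hqx_ray]
    exact mul_nonpos_of_nonneg_of_nonpos hc.le hqp
  have hpx : φ p x ≤ 0 := by
    obtain ⟨s, t, -, ht, -, rfl⟩ := hx
    simpa [hself p hp] using mul_nonpos_of_nonneg_of_nonpos ht hpr.le
  obtain ⟨c', hc', hxp_ray⟩ := (hray p hp x hxC
    (mul_nonneg_of_nonpos_of_nonpos hpx hxp)).exists_pos_right (hne p hp) (hne x hxC)
  rw [hxp_ray, ← hqx_ray] at hpr
  exact hpr.not_ge (mul_nonneg hc'.le (mul_nonneg hc.le hqr))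

-- `0 ≤ φ p q` is a total preorder, so the closed sets `C ∩ {p | φ q p ≤ 0}` are nested.
theorem exists_forall_apply_nonneg_of_sameRay [IsTopologicalAddGroup F] [ContinuousSMul ℝ F]
    [T2Space F] (hcomp : IsCompact C) (hconv : Convex ℝ C) (hnonempty : C.Nonempty)
    (hself : ∀ p ∈ C, φ p p = 0)
    (hray : ∀ p ∈ C, ∀ q ∈ C, 0 ≤ φ p q * φ q p → SameRay ℝ (φ p) (φ q)) :
    ∃ p ∈ C, ∀ q ∈ C, 0 ≤ φ p q := by
  by_cases! hne : ∃ p ∈ C, φ p = 0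
  · obtain ⟨p, hp, hφ⟩ := hne
    exact ⟨p, hp, fun q _ => by simp [hφ]⟩
  have nonneg_iff {p q : F} (hp : p ∈ C) (hq : q ∈ C) : 0 ≤ φ p q ↔ φ q p ≤ 0 :=
    apply_nonneg_iff_of_sameRay hself hne hray hp hq
  let D (q : C) : Set F := C ∩ {p | φ q p ≤ 0}
  have anti : ∀ q q' : C, 0 ≤ φ q q' → D q ⊆ D q' := by
    rintro ⟨q, hq⟩ ⟨q', hq'⟩ hqq' p ⟨hp, hpq⟩
    refine ⟨hp, (nonneg_iff hp hq').1 ?_⟩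
    exact apply_nonneg_trans_of_sameRay hconv hself hne hray hp hq hq'
      ((nonneg_iff hp hq).2 hpq) hqq'
  have directed : Directed (· ⊇ ·) D := by
    intro q q'
    rcases le_total 0 (φ q q') with h | h
    · exact ⟨q, subset_rfl, anti q q' h⟩
    · exact ⟨q', anti q' q ((nonneg_iff q'.2 q.2).2 h), subset_rfl⟩
  have isClosed_section (q : C) : IsClosed {p | φ q p ≤ 0} :=
    isClosed_le (φ q).continuous continuous_const
  have : Nonempty C := hnonempty.to_subtype
  obtain ⟨p, hp⟩ := IsCompact.nonempty_iInter_of_directed_nonempty_isCompact_isClosed D directed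
    (fun q => ⟨q, q.2, (hself q q.2).le⟩) (fun q => hcomp.inter_right (isClosed_section q))
    (fun q => hcomp.isClosed.inter (isClosed_section q))
  rw [Set.mem_iInter] at hp
  have hpC : p ∈ C := (hp ⟨_, hnonempty.some_mem⟩).1
  exact ⟨p, hpC, fun q hq => (nonneg_iff hpC hq).2 (hp ⟨q, hq⟩).2⟩

end TangentPointFamily

theorem mul_nonneg_of_units_smul_nonneg {R : Type*} [Ring R] [PartialOrder R] [IsOrderedRing R]
    (e : ℤˣ) {x y : R} (hx : 0 ≤ e • x) (hy : 0 ≤ e • y) : 0 ≤ x * y := by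
  have h := mul_nonneg hx hy
  rwa [smul_mul_smul_comm, Int.units_mul_self, one_smul] at h

section TangentTransversal

variable {n : ℕ} {F : Type*} [NormedAddCommGroup F] [NormedSpace ℝ F]

/-- The hyperplane spanned by the points `y i ∈ L i`, oriented by `crossForm b y`, supports each
`L i` at `y i`, and `L i` lies on its side prescribed by the sign `ε i`. -/
def IsTangentTransversal (b : Module.Basis (Fin (n + 1)) ℝ F) (L : Fin n → Set F)
    (ε : Fin n → ℤˣ) (y : Fin n → F) : Prop :=
  ∀ i, y i ∈ L i ∧ ∀ z ∈ L i, 0 ≤ ε i • crossForm b y z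

variable {b : Module.Basis (Fin (n + 1)) ℝ F} {L : Fin n → Set F}

theorem IsTangentTransversal.sameRay (hcomp : ∀ i, IsCompact (L i)) (hconv : ∀ i, Convex ℝ (L i))
    (hind : ∀ y : Fin n → F, (∀ i, y i ∈ L i) → LinearIndependent ℝ y) {ε : Fin n → ℤˣ}
    {y y' : Fin n → F} (hy : IsTangentTransversal b L ε y) (hy' : IsTangentTransversal b L ε y') :
    SameRay ℝ (crossForm b y) (crossForm b y') :=
  sameRay_crossForm hcomp hconv hind (fun i => (hy i).1) (fun i => (hy' i).1) fun i =>
    mul_nonneg_of_units_smul_nonneg (ε i) ((hy i).2 _ (hy' i).1) ((hy' i).2 _ (hy i).1)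

theorem IsTangentTransversal.sign_eq_of_sameRay (hspan : ∀ i, Submodule.span ℝ (L i) = ⊤)
    (hind : ∀ y : Fin n → F, (∀ i, y i ∈ L i) → LinearIndependent ℝ y) {ε ε' : Fin n → ℤˣ}
    {y y' : Fin n → F} (hy : IsTangentTransversal b L ε y) (hy' : IsTangentTransversal b L ε' y')
    (hray : SameRay ℝ (crossForm b y) (crossForm b y')) : ε = ε' := by
  have ne_zero := crossForm_ne_zero (b := b) (hind y fun i => (hy i).1)
  obtain ⟨c, hc, hyy'⟩ := hray.exists_pos_left ne_zero
    (crossForm_ne_zero (hind y' fun i => (hy' i).1))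
  by_contra hne
  obtain ⟨i, hi⟩ := Function.ne_iff.1 hne
  refine ne_zero (LinearMap.ext_on (hspan i) fun z hz => ?_)
  have h := (hy i).2 z hz
  have h' := (hy' i).2 z hz
  rw [Int.units_ne_iff_eq_neg.1 hi, Units.neg_smul] at h
  rw [← hyy', LinearMap.smul_apply, smul_comm] at h'
  have h0 : ε' i • crossForm b y z = 0 :=
    le_antisymm (by linarith) (nonneg_of_mul_nonneg_right h' hc)
  exact (smul_eq_zero_iff_eq (ε' i)).1 h0

theorem sameRay_crossForm_of_tangent_on (hcomp : ∀ i, IsCompact (L i))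
    (hconv : ∀ i, Convex ℝ (L i))
    (hind : ∀ y : Fin n → F, (∀ i, y i ∈ L i) → LinearIndependent ℝ y) {ε : Fin n → ℤˣ}
    {s : Finset (Fin n)} {k : Fin n} {y y' : Fin n → F} (hyL : ∀ i, y i ∈ L i)
    (hy'L : ∀ i, y' i ∈ L i) (hy : ∀ i ∈ s, ∀ z ∈ L i, 0 ≤ ε i • crossForm b y z)
    (hy' : ∀ i ∈ s, ∀ z ∈ L i, 0 ≤ ε i • crossForm b y' z)
    (heq : ∀ i ∉ s, i ≠ k → y i = y' i)
    (hcross : 0 ≤ crossForm b y (y' k) * crossForm b y' (y k)) :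
    SameRay ℝ (crossForm b y) (crossForm b y') := by
  refine sameRay_crossForm hcomp hconv hind hyL hy'L fun i => ?_
  by_cases his : i ∈ s
  · exact mul_nonneg_of_units_smul_nonneg (ε i) (hy i his _ (hy'L i)) (hy' i his _ (hyL i))
  rcases eq_or_ne i k with rfl | hik
  · exact hcross
  · rw [heq i his hik, crossForm_apply_self, mul_zero]

theorem exists_transversal_tangent_on (hcomp : ∀ i, IsCompact (L i))
    (hconv : ∀ i, Convex ℝ (L i))
    (hind : ∀ y : Fin n → F, (∀ i, y i ∈ L i) → LinearIndependent ℝ y) (ε : Fin n → ℤˣ)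
    (s : Finset (Fin n)) {q : Fin n → F} (hq : ∀ i, q i ∈ L i) :
    ∃ y : Fin n → F, (∀ i, y i ∈ L i) ∧ (∀ i ∉ s, y i = q i) ∧
      ∀ i ∈ s, ∀ z ∈ L i, 0 ≤ ε i • crossForm b y z := by
  have : FiniteDimensional ℝ F := .of_basis b
  induction s using Finset.induction_on generalizing q with
  | empty => exact ⟨q, hq, fun _ _ => rfl, by simp⟩
  | insert k s hk ih =>
    have update_mem {p : F} (hp : p ∈ L k) : ∀ i, Function.update q k p i ∈ L i :=
      (Function.forall_update_iff q fun i x => x ∈ L i).2 ⟨hp, fun i _ => hq i⟩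
    choose! Y hYL hYq hY using fun p (hp : p ∈ L k) => ih (update_mem hp)
    have hYk {p : F} (hp : p ∈ L k) : Y p k = p := by rw [hYq p hp k hk, Function.update_self]
    have hray : ∀ p ∈ L k, ∀ p' ∈ L k, 0 ≤ crossForm b (Y p) p' * crossForm b (Y p') p →
        SameRay ℝ (crossForm b (Y p)) (crossForm b (Y p')) := by
      intro p hp p' hp' hcross
      refine sameRay_crossForm_of_tangent_on hcomp hconv hind (hYL p hp) (hYL p' hp')
        (hY p hp) (hY p' hp') (fun i his hik => ?_) (k := k) (by rwa [hYk hp, hYk hp'])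
      rw [hYq p hp i his, hYq p' hp' i his, Function.update_of_ne hik, Function.update_of_ne hik]
    have hself : ∀ p ∈ L k, crossForm b (Y p) p = 0 := fun p hp => by
      simpa only [hYk hp] using crossForm_apply_self b (Y p) k
    obtain ⟨p, hp, hpk⟩ : ∃ p ∈ L k, ∀ z ∈ L k, 0 ≤ ε k • crossForm b (Y p) z := by
      refine exists_forall_apply_nonneg_of_sameRay
        (φ := fun p => (ε k • crossForm b (Y p)).toContinuousLinearMap) (hcomp k) (hconv k)
        ⟨q k, hq k⟩ (fun p hp => ?_) (fun p hp p' hp' hcross => ?_)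
      · simp [hself p hp]
      · refine SameRay.map LinearMap.toContinuousLinearMap.toLinearMap
          ((hray p hp p' hp' ?_).smul (ε k))
        simpa only [LinearMap.coe_toContinuousLinearMap', LinearMap.smul_apply,
          smul_mul_smul_comm, Int.units_mul_self, one_smul] using hcross
    refine ⟨Y p, hYL p hp, fun i hi => ?_, fun i hi z hz => ?_⟩
    · rw [Finset.mem_insert, not_or] at hi
      rw [hYq p hp i hi.2, Function.update_of_ne hi.1]
    · rcases Finset.mem_insert.1 hi with rfl | his
      · exact hpk z hz
      · exact hY p hp i his z hz

theorem exists_isTangentTransversal (hcomp : ∀ i, IsCompact (L i)) (hconv : ∀ i, Convex ℝ (L i))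
    (hnonempty : ∀ i, (L i).Nonempty)
    (hind : ∀ y : Fin n → F, (∀ i, y i ∈ L i) → LinearIndependent ℝ y) (ε : Fin n → ℤˣ) :
    ∃ y, IsTangentTransversal b L ε y := by
  choose q hq using hnonempty
  obtain ⟨y, hyL, -, hy⟩ := exists_transversal_tangent_on hcomp hconv hind ε Finset.univ hq
  exact ⟨y, fun i => ⟨hyL i, hy i (Finset.mem_univ i)⟩⟩

end TangentTransversal

theorem exists_units_smul_nonneg_iff {α R : Type*} [Ring R] [PartialOrder R] [IsOrderedRing R]
    {f : α → R} {s : Set α} :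
    (∃ e : ℤˣ, ∀ z ∈ s, 0 ≤ e • f z) ↔ (∀ z ∈ s, 0 ≤ f z) ∨ ∀ z ∈ s, f z ≤ 0 := by
  constructor
  · rintro ⟨e, he⟩
    rcases Int.units_eq_one_or e with rfl | rfl
    · exact .inl (by simpa using he)
    · exact .inr (by simpa using he)
  · rintro (h | h)
    · exact ⟨1, by simpa using h⟩
    · exact ⟨-1, by simpa using h⟩

/-- A nonzero linear form whose kernel is a common supporting hyperplane of the sets `L i`. -/
def IsTangentForm {ι F : Type*} [AddCommGroup F] [Module ℝ F] (L : ι → Set F)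
    (v : Module.Dual ℝ F) : Prop :=
  v ≠ 0 ∧ ∀ i, (∃ z ∈ L i, v z = 0) ∧ ((∀ z ∈ L i, 0 ≤ v z) ∨ ∀ z ∈ L i, v z ≤ 0)

section TangentForm

variable {n : ℕ} {F : Type*} [NormedAddCommGroup F] [NormedSpace ℝ F]
  {b : Module.Basis (Fin (n + 1)) ℝ F} {L : Fin n → Set F}

theorem IsTangentTransversal.isTangentForm
    (hind : ∀ y : Fin n → F, (∀ i, y i ∈ L i) → LinearIndependent ℝ y) {ε : Fin n → ℤˣ}
    {y : Fin n → F} (hy : IsTangentTransversal b L ε y) : IsTangentForm L (crossForm b y) :=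
  ⟨crossForm_ne_zero (hind y fun i => (hy i).1), fun i =>
    ⟨⟨y i, (hy i).1, crossForm_apply_self b y i⟩,
      exists_units_smul_nonneg_iff.1 ⟨ε i, (hy i).2⟩⟩⟩

theorem IsTangentForm.exists_isTangentTransversal
    (hind : ∀ y : Fin n → F, (∀ i, y i ∈ L i) → LinearIndependent ℝ y) {v : Module.Dual ℝ F}
    (hv : IsTangentForm L v) : ∃ ε y, IsTangentTransversal b L ε y ∧
      LinearMap.ker (crossForm b y) = LinearMap.ker v := by
  have : FiniteDimensional ℝ F := .of_basis b
  choose y hy using fun i => (hv.2 i).1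
  choose e he using fun i => exists_units_smul_nonneg_iff.2 (hv.2 i).2
  have hyL : ∀ i, y i ∈ L i := fun i => (hy i).1
  have finrank_eq : Module.finrank ℝ F = n + 1 := by
    rw [Module.finrank_eq_card_basis b, Fintype.card_fin]
  have ker_eq : LinearMap.ker (crossForm b y) = LinearMap.ker v := by
    rw [ker_eq_span_of_forall_apply_eq_zero finrank_eq (hind y hyL) hv.1 fun i => (hy i).2,
      ker_eq_span_of_forall_apply_eq_zero finrank_eq (hind y hyL) (crossForm_ne_zero (hind y hyL))
        (crossForm_apply_self b y)]
  obtain ⟨c, hc⟩ : ∃ c : ℝ, c • v = crossForm b y :=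
    Submodule.mem_span_singleton.1 <| by
      simpa using mem_span_of_iInf_ker_le_ker (ι := Unit) (L := fun _ => v)
        (K := crossForm b y) (by simp [ker_eq])
  rcases le_total 0 c with h | h
  · refine ⟨e, y, fun i => ⟨hyL i, fun z hz => ?_⟩, ker_eq⟩
    rw [← hc, LinearMap.smul_apply, smul_comm]
    exact mul_nonneg h (he i z hz)
  · refine ⟨-e, y, fun i => ⟨hyL i, fun z hz => ?_⟩, ker_eq⟩
    rw [← hc, LinearMap.smul_apply, smul_comm, Pi.neg_apply, Units.neg_smul]
    exact mul_nonneg_of_nonpos_of_nonpos h (neg_nonpos.2 (he i z hz))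

theorem encard_ker_image_isTangentForm (hn : Module.finrank ℝ F = n + 1)
    (hcomp : ∀ i, IsCompact (L i)) (hconv : ∀ i, Convex ℝ (L i))
    (hspan : ∀ i, Submodule.span ℝ (L i) = ⊤)
    (hind : ∀ y : Fin n → F, (∀ i, y i ∈ L i) → LinearIndependent ℝ y) :
    (LinearMap.ker '' {v | IsTangentForm L v}).encard = 2 ^ n := by
  have : FiniteDimensional ℝ F := Module.finite_of_finrank_eq_succ hn
  have : Nontrivial F := Module.nontrivial_of_finrank_eq_succ hn
  have hnonempty : ∀ i, (L i).Nonempty := fun i =>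
    Set.nonempty_iff_ne_empty.2 fun h =>
      bot_ne_top (α := Submodule ℝ F) (by simpa [h] using hspan i)
  let b := Module.finBasisOfFinrankEq ℝ F hn
  choose Y hY using exists_isTangentTransversal (b := b) hcomp hconv hnonempty hind
  have injective : Function.Injective fun ε => LinearMap.ker (crossForm b (Y ε)) := by
    intro ε ε' (hker : LinearMap.ker _ = LinearMap.ker _)
    refine (hY ε).sign_eq_of_sameRay hspan hind (hY ε') <|
      sameRay_crossForm hcomp hconv hind (fun i => (hY ε i).1) (fun i => (hY ε' i).1) fun i => ?_
    have : Y ε' i ∈ LinearMap.ker (crossForm b (Y ε)) := hker ▸ crossForm_apply_self b _ i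
    rw [LinearMap.mem_ker.1 this, zero_mul]
  have range_eq : LinearMap.ker '' {v | IsTangentForm L v} =
      Set.range fun ε => LinearMap.ker (crossForm b (Y ε)) := by
    ext M
    constructor
    · rintro ⟨v, hv, rfl⟩
      obtain ⟨ε, y, hy, hker⟩ := hv.exists_isTangentTransversal (b := b) hind
      obtain ⟨c, hc, hcy⟩ := ((hY ε).sameRay hcomp hconv hind hy).exists_pos_left
        (crossForm_ne_zero (hind _ fun i => (hY ε i).1))
        (crossForm_ne_zero (hind _ fun i => (hy i).1))
      exact ⟨ε, by rw [← hker, ← hcy, LinearMap.ker_smul _ _ hc.ne']⟩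
    · rintro ⟨ε, rfl⟩
      exact ⟨_, (hY ε).isTangentForm hind, rfl⟩
  rw [range_eq, ← Set.image_univ, injective.injOn.encard_image, Set.encard_univ]
  simp

end TangentForm

theorem linearIndependent_one_prodMk_of_affineIndependent {𝕜 V ι : Type*} [Ring 𝕜] [AddCommGroup V]
    [Module 𝕜 V] {x : ι → V} (hx : AffineIndependent 𝕜 x) :
    LinearIndependent 𝕜 fun i => ((1 : 𝕜), x i) := by
  rw [linearIndependent_iff']
  intro s c hc i hi
  refine affineIndependent_iff.1 hx s c ?_ ?_ i hi
  · simpa [Prod.fst_sum] using congrArg Prod.fst hc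
  · simpa [Prod.snd_sum] using congrArg Prod.snd hc

theorem span_one_prod_eq_top {𝕜 V : Type*} [Ring 𝕜] [AddCommGroup V] [Module 𝕜 V] {s : Set V}
    (hs : affineSpan 𝕜 s = ⊤) : Submodule.span 𝕜 ({(1 : 𝕜)} ×ˢ s) = ⊤ := by
  set M := Submodule.span 𝕜 ({(1 : 𝕜)} ×ˢ s)
  have one_mem (x : V) : ((1 : 𝕜), x) ∈ M := by
    have : affineSpan 𝕜 s ≤ M.toAffineSubspace.comap
        ((AffineMap.const 𝕜 V (1 : 𝕜)).prod (AffineMap.id 𝕜 V)) :=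
      affineSpan_le.2 fun y hy => Submodule.subset_span ⟨rfl, hy⟩
    exact this (hs ▸ AffineSubspace.mem_top 𝕜 V x)
  refine Submodule.eq_top_iff'.2 fun ⟨t, x⟩ => ?_
  have : (t, x) = (t - 1) • ((1 : 𝕜), (0 : V)) + ((1 : 𝕜), x) := by simp
  rw [this]
  exact M.add_mem (M.smul_mem _ (one_mem 0)) (one_mem x)

/-- `H` is an affine hyperplane which supports each of the sets `K i`. -/
def IsCommonTangentHyperplane {ι E : Type*} [NormedAddCommGroup E] [NormedSpace ℝ E]
    (K : ι → Set E) (H : Set E) : Prop :=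
  ∃ (f : StrongDual ℝ E) (a : ℝ), f ≠ 0 ∧ H = {x | f x = a} ∧
    ∀ i, (H ∩ K i).Nonempty ∧ (K i ⊆ {x | a ≤ f x} ∨ K i ⊆ {x | f x ≤ a})

section Homogenization

variable {ι E : Type*} [NormedAddCommGroup E] [NormedSpace ℝ E]

/-- The linear form `(t, x) ↦ f x - t * a` on the space of homogeneous coordinates: its zeros with
`t = 1` form the affine hyperplane `f x = a`. -/
def homogenization (f : StrongDual ℝ E) (a : ℝ) : Module.Dual ℝ (ℝ × E) :=
  LinearMap.coprod (-LinearMap.mulRight ℝ a) f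

theorem homogenization_apply (f : StrongDual ℝ E) (a t : ℝ) (x : E) :
    homogenization f a (t, x) = f x - t * a := by
  simp only [homogenization, LinearMap.coprod_apply, LinearMap.neg_apply,
    LinearMap.mulRight_apply, ContinuousLinearMap.coe_coe, neg_add_eq_sub]

theorem exists_homogenization_eq [FiniteDimensional ℝ E] (v : Module.Dual ℝ (ℝ × E)) :
    ∃ f a, homogenization f a = v := by
  refine ⟨(v ∘ₗ LinearMap.inr ℝ ℝ E).toContinuousLinearMap, -v (1, 0), ?_⟩
  ext <;> simp [homogenization_apply, Prod.mk_zero_zero]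

theorem homogenization_one_prod_eq_zero_iff {f : StrongDual ℝ E} {a : ℝ} {x : E} :
    homogenization f a (1, x) = 0 ↔ f x = a := by
  rw [homogenization_apply, one_mul, sub_eq_zero]

theorem isTangentForm_homogenization_iff [Nonempty ι] {K : ι → Set E} {f : StrongDual ℝ E}
    {a : ℝ} : IsTangentForm (fun i => {(1 : ℝ)} ×ˢ K i) (homogenization f a) ↔
      f ≠ 0 ∧ ∀ i, ({x | f x = a} ∩ K i).Nonempty ∧
        (K i ⊆ {x | a ≤ f x} ∨ K i ⊆ {x | f x ≤ a}) := by
  have tangent_iff : ∀ i, ((∃ z ∈ {(1 : ℝ)} ×ˢ K i, homogenization f a z = 0) ∧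
      ((∀ z ∈ {(1 : ℝ)} ×ˢ K i, 0 ≤ homogenization f a z) ∨
        ∀ z ∈ {(1 : ℝ)} ×ˢ K i, homogenization f a z ≤ 0)) ↔
      ({x | f x = a} ∩ K i).Nonempty ∧ (K i ⊆ {x | a ≤ f x} ∨ K i ⊆ {x | f x ≤ a}) := by
    intro i
    simp only [Set.singleton_prod, Set.exists_mem_image, Set.forall_mem_image,
      homogenization_apply, one_mul, sub_nonneg, sub_nonpos, sub_eq_zero]
    exact and_congr_left' ⟨fun ⟨x, hx, hfx⟩ => ⟨x, hfx, hx⟩, fun ⟨x, hfx, hx⟩ => ⟨x, hx, hfx⟩⟩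
  unfold IsTangentForm
  simp only [tangent_iff]
  refine and_congr_left fun htangent => not_congr ⟨fun hv => ?_, fun hf => ?_⟩
  · ext x
    simpa [homogenization_apply] using LinearMap.congr_fun hv (0, x)
  · obtain ⟨x, hfx, -⟩ := (htangent (Classical.arbitrary ι)).1
    obtain rfl : 0 = a := by simpa [hf] using hfx
    ext <;> simp [homogenization_apply, hf]

theorem isCommonTangentHyperplane_iff [Nonempty ι] [FiniteDimensional ℝ E] {K : ι → Set E}
    {H : Set E} : IsCommonTangentHyperplane K H ↔ ∃ v : Module.Dual ℝ (ℝ × E),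
      IsTangentForm (fun i => {(1 : ℝ)} ×ˢ K i) v ∧ {x | v (1, x) = 0} = H := by
  constructor
  · rintro ⟨f, a, hf, rfl, htangent⟩
    exact ⟨homogenization f a, isTangentForm_homogenization_iff.2 ⟨hf, htangent⟩,
      Set.ext fun _ => homogenization_one_prod_eq_zero_iff⟩
  · rintro ⟨v, hv, rfl⟩
    obtain ⟨f, a, rfl⟩ := exists_homogenization_eq v
    obtain ⟨hf, htangent⟩ := isTangentForm_homogenization_iff.1 hv
    simp only [homogenization_one_prod_eq_zero_iff]
    exact ⟨f, a, hf, rfl, htangent⟩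

theorem isCommonTangentHyperplane_iff_inner {V : Type*} [NormedAddCommGroup V]
    [InnerProductSpace ℝ V] [CompleteSpace V] {K : ι → Set V} {H : Set V} :
    IsCommonTangentHyperplane K H ↔ ∃ (u : V) (α : ℝ), u ≠ 0 ∧ H = {x | ⟪u, x⟫_ℝ = α} ∧
      ∀ i, (H ∩ K i).Nonempty ∧
        (K i ⊆ {x | α ≤ ⟪u, x⟫_ℝ} ∨ K i ⊆ {x | ⟪u, x⟫_ℝ ≤ α}) := by
  simp only [IsCommonTangentHyperplane, (InnerProductSpace.toDual ℝ V).surjective.exists,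
    InnerProductSpace.toDual_apply_apply, ne_eq, LinearIsometryEquiv.map_eq_zero_iff]

end Homogenization

theorem linearIndependent_of_mem_one_prod {𝕜 V ι : Type*} [Ring 𝕜] [AddCommGroup V] [Module 𝕜 V]
    {K : ι → Set V} (hind : ∀ x : ι → V, (∀ i, x i ∈ K i) → AffineIndependent 𝕜 x)
    {y : ι → 𝕜 × V} (hy : ∀ i, y i ∈ {(1 : 𝕜)} ×ˢ K i) : LinearIndependent 𝕜 y := by
  have : y = fun i => (1, (y i).2) := funext fun i => Prod.ext (hy i).1 rfl
  rw [this]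
  exact linearIndependent_one_prodMk_of_affineIndependent (hind _ fun i => (hy i).2)

theorem injOn_slice_ker_isTangentForm {n : ℕ} {E : Type*} [AddCommGroup E] [Module ℝ E]
    (hn : Module.finrank ℝ (ℝ × E) = n + 1) {K : Fin n → Set E}
    (hind : ∀ y : Fin n → ℝ × E, (∀ i, y i ∈ {(1 : ℝ)} ×ˢ K i) → LinearIndependent ℝ y) :
    Set.InjOn (fun M : Submodule ℝ (ℝ × E) => {x : E | (1, x) ∈ M})
      (LinearMap.ker '' {v | IsTangentForm (fun i => {(1 : ℝ)} ×ˢ K i) v}) := by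
  rintro _ ⟨v, hv, rfl⟩ _ ⟨v', hv', rfl⟩ hslice
  choose y hy hvy using fun i => (hv.2 i).1
  have hv'y (i : Fin n) : v' (y i) = 0 := by
    have hyi : y i = (1, (y i).2) := Prod.ext (hy i).1 rfl
    have hvyi : v (1, (y i).2) = 0 := by rw [← hyi, hvy i]
    rw [hyi]
    exact hslice.le hvyi
  rw [ker_eq_span_of_forall_apply_eq_zero hn (hind y hy) hv.1 hvy,
    ker_eq_span_of_forall_apply_eq_zero hn (hind y hy) hv'.1 hv'y]

theorem bisztriczky_total_count_general {d : ℕ} [NeZero d] {E : Type*} [NormedAddCommGroup E]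
    [NormedSpace ℝ E] (hE : Module.finrank ℝ E = d) {K : Fin d → Set E}
    (hcomp : ∀ i, IsCompact (K i)) (hconv : ∀ i, Convex ℝ (K i))
    (hint : ∀ i, (interior (K i)).Nonempty)
    (hind : ∀ x : Fin d → E, (∀ i, x i ∈ K i) → AffineIndependent ℝ x) :
    {H | IsCommonTangentHyperplane K H}.encard = 2 ^ d := by
  have : FiniteDimensional ℝ E := Module.finite_of_finrank_pos (hE ▸ NeZero.pos d)
  have finrank_eq : Module.finrank ℝ (ℝ × E) = d + 1 := by
    rw [Module.finrank_prod, Module.finrank_self, hE, add_comm]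
  have hind_one (y : Fin d → ℝ × E) (hy : ∀ i, y i ∈ {(1 : ℝ)} ×ˢ K i) :
      LinearIndependent ℝ y := linearIndependent_of_mem_one_prod hind hy
  have slices_eq : {H | IsCommonTangentHyperplane K H} =
      (fun M : Submodule ℝ (ℝ × E) => {x : E | (1, x) ∈ M}) ''
        (LinearMap.ker '' {v | IsTangentForm (fun i => {(1 : ℝ)} ×ˢ K i) v}) := by
    ext H
    rw [Set.image_image]
    exact isCommonTangentHyperplane_iff
  have affineSpan_eq_top (i : Fin d) : affineSpan ℝ (K i) = ⊤ :=
    (hconv i).interior_nonempty_iff_affineSpan_eq_top.1 (hint i)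
  rw [slices_eq, (injOn_slice_ker_isTangentForm finrank_eq hind_one).encard_image]
  exact encard_ker_image_isTangentForm finrank_eq (fun i => isCompact_singleton.prod (hcomp i))
    (fun i => (convex_singleton 1).prod (hconv i))
    (fun i => span_one_prod_eq_top (affineSpan_eq_top i)) hind_one

theorem StronglySeparated.neZero {d m : ℕ} {S : Fin m → Set (EuclideanSpace ℝ (Fin d))}
    (hS : StronglySeparated S) : NeZero d := by
  obtain ⟨u, -, hu, -⟩ := hS ∅
  exact ⟨by rintro rfl; exact hu (Subsingleton.elim u 0)⟩

theorem StronglySeparated.affineIndependent {d m : ℕ} {S : Fin m → Set (EuclideanSpace ℝ (Fin d))}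
    (hS : StronglySeparated S) {x : Fin m → EuclideanSpace ℝ (Fin d)} (hx : ∀ i, x i ∈ S i) :
    AffineIndependent ℝ x := by
  rw [affineIndependent_iff]
  intro s c hc hcx
  obtain ⟨u, α, -, hlt, hgt⟩ := hS {i | c i < 0}
  have sum_eq_zero : ∑ i ∈ s, c i * (⟪u, x i⟫_ℝ - α) = 0 := by
    have : ∑ i ∈ s, c i * ⟪u, x i⟫_ℝ = ⟪u, ∑ i ∈ s, c i • x i⟫_ℝ := by
      simp only [inner_sum, real_inner_smul_right]
    simp only [mul_sub, Finset.sum_sub_distrib, ← Finset.sum_mul, this, hc, hcx, inner_zero_right,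
      zero_mul, sub_zero]
  have separated (i : Fin m) :
      c i < 0 ∧ ⟪u, x i⟫_ℝ - α < 0 ∨ 0 ≤ c i ∧ 0 < ⟪u, x i⟫_ℝ - α := by
    rcases lt_or_ge (c i) 0 with h | h
    · exact .inl ⟨h, sub_neg.2 (hlt i (by simpa using h) _ (hx i))⟩
    · exact .inr ⟨h, sub_pos.2 (hgt i (by simpa using h) _ (hx i))⟩
  have term_nonneg : ∀ i ∈ s, 0 ≤ c i * (⟪u, x i⟫_ℝ - α) := fun i _ => by
    rcases separated i with ⟨hci, hi⟩ | ⟨hci, hi⟩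
    · exact (mul_pos_of_neg_of_neg hci hi).le
    · exact mul_nonneg hci hi.le
  intro i hi
  have hzero := (Finset.sum_eq_zero_iff_of_nonneg term_nonneg).1 sum_eq_zero i hi
  refine (mul_eq_zero.1 hzero).resolve_right ?_
  rcases separated i with ⟨-, hi⟩ | ⟨-, hi⟩
  exacts [hi.ne, hi.ne']

/-- Bisztriczky's theorem, total count: a strongly separated family of `d` convex bodies
in `ℝ^d` has exactly `2^d` common tangent affine hyperplanes. -/
theorem bisztriczky_total_count {d : ℕ}
    (K : Fin d → Set (EuclideanSpace ℝ (Fin d)))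
    (hcomp : ∀ i, IsCompact (K i)) (hconv : ∀ i, Convex ℝ (K i))
    (hint : ∀ i, (interior (K i)).Nonempty)
    (hsep : StronglySeparated K) :
    {H : Set (EuclideanSpace ℝ (Fin d)) | ∃ (u : EuclideanSpace ℝ (Fin d)) (α : ℝ),
        u ≠ 0 ∧ H = {x | ⟪u, x⟫_ℝ = α} ∧
        ∀ i : Fin d, (H ∩ K i).Nonempty ∧
          (K i ⊆ {x | α ≤ ⟪u, x⟫_ℝ} ∨ K i ⊆ {x | ⟪u, x⟫_ℝ ≤ α})}.encard = 2 ^ d := by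
  have := hsep.neZero
  simpa only [isCommonTangentHyperplane_iff_inner] using bisztriczky_total_count_general
    finrank_euclideanSpace_fin hcomp hconv hint fun _ => hsep.affineIndependent
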